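/- Let F be a Finsler function on ℝⁿ. Then (ℝⁿ, F) is projectively flat in a parameter-preserving manner in the standard coordinates if and only if for every x ∈ ℝⁿ, every y ≠ 0 and every index i: ∑_k ∂²(F²)/∂x^k∂y^i(x,y)·y^k = ½·∑_k ∂²(F²)/∂x^i∂y^k(x,y)·y^k. -/

import Mathlib

open scoped BigOperators Topology
noncomputable section

abbrev E (n : ℕ) := Fin n → ℝ

/-- Partial derivative with respect to the base coordinate `x^i`. -/
def pdx {n : ℕ} (i : Fin n) (f : E n × E n → ℝ) (p : E n × E n) : ℝ :=
  fderiv ℝ f p (Pi.single i 1, 0)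

/-- Partial derivative with respect to the fibre coordinate `y^i`. -/
def pdy {n : ℕ} (i : Fin n) (f : E n × E n → ℝ) (p : E n × E n) : ℝ :=
  fderiv ℝ f p (0, Pi.single i 1)

/-- A Finsler function on `ℝⁿ`. -/
structure IsFinsler {n : ℕ} (F : E n × E n → ℝ) : Prop where
  smooth : ContDiffOn ℝ (⊤ : ℕ∞) F {p : E n × E n | p.2 ≠ 0}
  homog : ∀ (x y : E n) (c : ℝ), 0 < c → F (x, c • y) = c * F (x, y)
  pos : ∀ (x y : E n), y ≠ 0 → 0 < F (x, y)
  posDef : ∀ (x y : E n), y ≠ 0 →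
    (Matrix.of fun i j : Fin n =>
      (1 / 2) * pdy i (pdy j (fun p => F p ^ 2)) (x, y)).PosDef

/-- A geodesic of `(ℝⁿ, F)`: a `C²` curve on a nontrivial open interval, with nowhere
vanishing velocity, positive constant speed, satisfying the Euler–Lagrange equations. -/
structure IsGeodesic {n : ℕ} (F : E n × E n → ℝ) (γ : ℝ → E n) (t₁ t₂ : ℝ) : Prop where
  lt : t₁ < t₂
  smooth : ContDiffOn ℝ 2 γ (Set.Ioo t₁ t₂)
  vel : ∀ t ∈ Set.Ioo t₁ t₂, deriv γ t ≠ 0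
  constSpeed : ∃ c : ℝ, 0 < c ∧ ∀ t ∈ Set.Ioo t₁ t₂, F (γ t, deriv γ t) = c
  eulerLagrange : ∀ (i : Fin n), ∀ t ∈ Set.Ioo t₁ t₂,
    deriv (fun s => pdy i F (γ s, deriv γ s)) t = pdx i F (γ t, deriv γ t)

/-- The Hamel equations in the standard coordinates. -/
def SatisfiesHamel {n : ℕ} (F : E n × E n → ℝ) : Prop :=
  ∀ (x y : E n), y ≠ 0 → ∀ i : Fin n,
    ∑ k, pdx k (pdy i F) (x, y) * y k = ∑ k, pdx i (pdy k F) (x, y) * y k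

/-- `(ℝⁿ, F)` is rectilinear in the standard coordinates. -/
def Rectilinear {n : ℕ} (F : E n × E n → ℝ) : Prop :=
  ∀ (γ : ℝ → E n) (t₁ t₂ : ℝ), IsGeodesic F γ t₁ t₂ →
    ∃ (f : ℝ → ℝ) (a b : E n), a ≠ 0 ∧
      ContDiffOn ℝ 2 f (Set.Ioo t₁ t₂) ∧
      (∀ t ∈ Set.Ioo t₁ t₂, 0 < deriv f t) ∧
      ∀ t ∈ Set.Ioo t₁ t₂, γ t = f t • a + b

/-- `(ℝⁿ, F)` is projectively flat in a parameter-preserving manner in the standard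
coordinates: every geodesic has the form `t ↦ t • a + b`. -/
def ParamFlat {n : ℕ} (F : E n × E n → ℝ) : Prop :=
  ∀ (γ : ℝ → E n) (t₁ t₂ : ℝ), IsGeodesic F γ t₁ t₂ →
    ∃ a b : E n, a ≠ 0 ∧ ∀ t ∈ Set.Ioo t₁ t₂, γ t = t • a + b
/-!
Write `L = F ^ 2`. Along a curve of constant speed the Euler–Lagrange equations of `F` and of `L`
differ by the constant factor `2 * F`, and the fibre Hessian of `L` is invertible, so the
geodesics of `F` are the solutions of `γ'' = A (γ, γ')`, where `A` is the acceleration field of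
`L`; conversely every solution has constant speed, by conservation of energy. Solutions exist for
all initial data, so all geodesics are affinely parametrized lines iff `A` vanishes. By Euler's
theorem, applied to the `x`-derivative of `L`, which is 2-homogeneous in `y`, the vanishing of `A`
is the stated equation.
-/

section PartialDerivatives

variable {X V W : Type*} [NormedAddCommGroup X] [NormedSpace ℝ X] [NormedAddCommGroup V]
  [NormedSpace ℝ V] [NormedAddCommGroup W] [NormedSpace ℝ W]

/-- The partial derivative `∂f/∂x` of `f (x, y)`, as a continuous linear map. -/
def baseDeriv (f : X × V → W) (p : X × V) : X →L[ℝ] W :=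
  fderiv ℝ f p ∘L .inl ℝ X V

/-- The partial derivative `∂f/∂y` of `f (x, y)`, as a continuous linear map. For a Lagrangian it
is the momentum. -/
def fiberDeriv (f : X × V → W) (p : X × V) : V →L[ℝ] W :=
  fderiv ℝ f p ∘L .inr ℝ X V

/-- The second partial derivative `∂²f/∂y²` of `f (x, y)`, as a map from `V` to `V →L[ℝ] W`; for a
scalar `f` its invertibility is the Legendre condition. -/
def fiberHessian (f : X × V → W) (p : X × V) : V →L[ℝ] V →L[ℝ] W :=
  fiberDeriv (fiberDeriv f) p

/-- Positive homogeneity of degree `k` in the second variable. -/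
def FiberHomogeneous (k : ℕ) (f : X × V → W) : Prop :=
  ∀ (x : X) (y : V) (c : ℝ), 0 < c → f (x, c • y) = c ^ k • f (x, y)

lemma fderiv_apply_eq_baseDeriv_add_fiberDeriv (f : X × V → W) (p v : X × V) :
    fderiv ℝ f p v = baseDeriv f p v.1 + fiberDeriv f p v.2 := by
  simp [baseDeriv, fiberDeriv, ← map_add]

lemma contDiffAt_fiberDeriv {m : WithTop ℕ∞} {f : X × V → W} {p : X × V}
    (hf : ContDiffAt ℝ (m + 1) f p) : ContDiffAt ℝ m (fiberDeriv f) p :=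
  hf.fderiv_right_succ.clm_comp contDiffAt_const

lemma contDiffAt_baseDeriv {m : WithTop ℕ∞} {f : X × V → W} {p : X × V}
    (hf : ContDiffAt ℝ (m + 1) f p) : ContDiffAt ℝ m (baseDeriv f) p :=
  hf.fderiv_right_succ.clm_comp contDiffAt_const

lemma contDiffAt_fiberHessian {m : WithTop ℕ∞} {f : X × V → W} {p : X × V}
    (hf : ContDiffAt ℝ (m + 1 + 1) f p) : ContDiffAt ℝ m (fiberHessian f) p :=
  contDiffAt_fiberDeriv (contDiffAt_fiberDeriv hf)

lemma differentiableAt_fiberDeriv {f : X × V → W} {p : X × V} (hf : ContDiffAt ℝ 2 f p) :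
    DifferentiableAt ℝ (fiberDeriv f) p :=
  (contDiffAt_fiberDeriv (m := 1) hf).differentiableAt one_ne_zero

lemma differentiableAt_baseDeriv {f : X × V → W} {p : X × V} (hf : ContDiffAt ℝ 2 f p) :
    DifferentiableAt ℝ (baseDeriv f) p :=
  (contDiffAt_baseDeriv (m := 1) hf).differentiableAt one_ne_zero

lemma fderiv_fiberDeriv_apply {f : X × V → W} {p : X × V} (hf : ContDiffAt ℝ 2 f p)
    (v : X × V) (w : V) :
    fderiv ℝ (fiberDeriv f) p v w = fderiv ℝ (fderiv ℝ f) p v (0, w) := by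
  have hf' := (hf.fderiv_right_succ (n := 1)).differentiableAt one_ne_zero
  change fderiv ℝ (fun q ↦ fderiv ℝ f q ∘L .inr ℝ X V) p v w = _
  simp [fderiv_clm_comp hf' (differentiableAt_const _)]

lemma fderiv_baseDeriv_apply {f : X × V → W} {p : X × V} (hf : ContDiffAt ℝ 2 f p)
    (v : X × V) (u : X) :
    fderiv ℝ (baseDeriv f) p v u = fderiv ℝ (fderiv ℝ f) p v (u, 0) := by
  have hf' := (hf.fderiv_right_succ (n := 1)).differentiableAt one_ne_zero
  change fderiv ℝ (fun q ↦ fderiv ℝ f q ∘L .inl ℝ X V) p v u = _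
  simp [fderiv_clm_comp hf' (differentiableAt_const _)]

lemma fderiv_fiberDeriv_inl_eq_fderiv_baseDeriv_inr {f : X × V → W} {p : X × V}
    (hf : ContDiffAt ℝ 2 f p) (u : X) (w : V) :
    fderiv ℝ (fiberDeriv f) p (u, 0) w = fderiv ℝ (baseDeriv f) p (0, w) u := by
  rw [fderiv_fiberDeriv_apply hf, fderiv_baseDeriv_apply hf]
  exact (hf.isSymmSndFDerivAt (by simp)).eq _ _

lemma fiberDeriv_sq {f : X × V → ℝ} {p : X × V} (hf : DifferentiableAt ℝ f p) :
    fiberDeriv (f ^ 2) p = (2 * f p) • fiberDeriv f p := by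
  simp [fiberDeriv, fderiv_pow 2 hf, ContinuousLinearMap.smul_comp]

lemma baseDeriv_sq {f : X × V → ℝ} {p : X × V} (hf : DifferentiableAt ℝ f p) :
    baseDeriv (f ^ 2) p = (2 * f p) • baseDeriv f p := by
  simp [baseDeriv, fderiv_pow 2 hf, ContinuousLinearMap.smul_comp]

namespace FiberHomogeneous

variable {k : ℕ}

lemma sq {Y : Type*} {f : Y × V → ℝ} (hf : FiberHomogeneous k f) :
    FiberHomogeneous (k * 2) (f ^ 2) := by
  intro x y c hc
  simp only [Pi.pow_apply, hf x y c hc, smul_eq_mul, mul_pow, pow_mul]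

lemma baseDeriv {f : X × V → W} (hf : FiberHomogeneous k f) :
    FiberHomogeneous k (baseDeriv f) := by
  intro x y c hc
  let dilation : (X × V) ≃L[ℝ] (X × V) :=
    (ContinuousLinearEquiv.refl ℝ X).prodCongr (.smulLeft (Units.mk0 c hc.ne'))
  have hcomp : f ∘ dilation = c ^ k • f := funext fun p ↦ hf p.1 p.2 c hc
  have hfderiv : fderiv ℝ f (x, c • y) ∘L dilation = c ^ k • fderiv ℝ f (x, y) := by
    calc fderiv ℝ f (x, c • y) ∘L dilation = fderiv ℝ (f ∘ dilation) (x, y) :=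
          (dilation.comp_right_fderiv (f := f) (x := (x, y))).symm
      _ = c ^ k • fderiv ℝ f (x, y) := by rw [hcomp, fderiv_const_smul_field]; rfl
  ext u
  simpa [dilation, _root_.baseDeriv] using DFunLike.congr_fun hfderiv (u, 0)

lemma fiberDeriv_apply_self {f : X × V → W} (hf : FiberHomogeneous k f) {p : X × V}
    (hd : DifferentiableAt ℝ f p) : fiberDeriv f p p.2 = (k : ℝ) • f p := by
  have hray : HasDerivAt (fun c : ℝ ↦ (p.1, c • p.2)) (0, p.2) 1 := by
    simpa using (hasDerivAt_const (1 : ℝ) p.1).prodMk ((hasDerivAt_id (1 : ℝ)).smul_const p.2)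
  have hleft : HasDerivAt (fun c : ℝ ↦ f (p.1, c • p.2)) (fderiv ℝ f p (0, p.2)) 1 :=
    HasFDerivAt.comp_hasDerivAt 1 (by simpa using hd.hasFDerivAt) hray
  have hright : HasDerivAt (fun c : ℝ ↦ c ^ k • f p) ((k : ℝ) • f p) 1 := by
    simpa using (hasDerivAt_pow k (1 : ℝ)).smul_const (f p)
  refine hleft.unique (hright.congr_of_eventuallyEq ?_)
  filter_upwards [lt_mem_nhds zero_lt_one] with c hc
  exact hf p.1 p.2 c hc

end FiberHomogeneous

end PartialDerivatives

section Curves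

variable {V : Type*} [NormedAddCommGroup V] [NormedSpace ℝ V]

lemma hasDerivAt_smul_add (a b : V) (t : ℝ) : HasDerivAt (fun s : ℝ ↦ s • a + b) a t := by
  simpa using ((hasDerivAt_id t).smul_const a).add_const b

lemma hasDerivAt_deriv_of_contDiffOn_two {γ : ℝ → V} {S : Set ℝ} (hS : IsOpen S)
    (hγ : ContDiffOn ℝ 2 γ S) {t : ℝ} (ht : t ∈ S) :
    HasDerivAt γ (deriv γ t) t ∧ HasDerivAt (deriv γ) (deriv (deriv γ) t) t := by
  obtain ⟨hγ₀, -, hγ₁⟩ := (contDiffOn_succ_iff_deriv_of_isOpen (n := 1) hS).1 hγ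
  exact ⟨(hγ₀.differentiableAt (hS.mem_nhds ht)).hasDerivAt,
    ((hγ₁.differentiableOn one_ne_zero).differentiableAt (hS.mem_nhds ht)).hasDerivAt⟩

lemma contDiffOn_two_of_hasDerivAt {γ a : ℝ → V} {S : Set ℝ} (hS : IsOpen S)
    (hγ : ∀ t ∈ S, DifferentiableAt ℝ γ t) (hγ' : ∀ t ∈ S, HasDerivAt (deriv γ) (a t) t)
    (ha : ContinuousOn a S) : ContDiffOn ℝ 2 γ S := by
  have hderiv : ContDiffOn ℝ (0 + 1) (deriv γ) S :=
    (contDiffOn_succ_iff_deriv_of_isOpen hS).2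
      ⟨fun t ht ↦ (hγ' t ht).differentiableAt.differentiableWithinAt, by simp,
        contDiffOn_zero.2 (ha.congr fun t ht ↦ (hγ' t ht).deriv)⟩
  exact (contDiffOn_succ_iff_deriv_of_isOpen (n := 1) hS).2
    ⟨fun t ht ↦ (hγ t ht).differentiableWithinAt, by simp, by simpa using hderiv⟩

lemma eq_smul_add_of_hasDerivAt_deriv_zero {γ : ℝ → V} {S : Set ℝ} (hS : IsOpen S)
    (hconn : IsPreconnected S) (hγ : ∀ t ∈ S, DifferentiableAt ℝ γ t)
    (hγ' : ∀ t ∈ S, HasDerivAt (deriv γ) 0 t) {m t : ℝ} (hm : m ∈ S) (ht : t ∈ S) :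
    γ t = t • deriv γ m + (γ m - m • deriv γ m) := by
  have hvel : ∀ s ∈ S, deriv γ s = deriv γ m := fun s hs ↦
    hS.is_const_of_deriv_eq_zero hconn
      (fun r hr ↦ (hγ' r hr).differentiableAt.differentiableWithinAt)
      (fun r hr ↦ (hγ' r hr).deriv) hs hm
  refine hS.eqOn_of_deriv_eq hconn
    (fun s hs ↦ (hγ s hs).differentiableWithinAt)
    (fun s _ ↦ (hasDerivAt_smul_add _ _ s).differentiableAt.differentiableWithinAt)
    (fun s hs ↦ ?_) hm (by simp) ht
  rw [hvel s hs, (hasDerivAt_smul_add _ _ s).deriv]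

lemma exists_secondOrder_solution [CompleteSpace V] {A : V × V → V} {p : V × V}
    (hA : ContDiffAt ℝ 1 A p) {U : Set (V × V)} (hU : U ∈ 𝓝 p) (t₀ : ℝ) :
    ∃ γ : ℝ → V, ∃ ε > 0, (γ t₀, deriv γ t₀) = p ∧
      ∀ t ∈ Set.Ioo (t₀ - ε) (t₀ + ε), (γ t, deriv γ t) ∈ U ∧
        HasDerivAt γ (deriv γ t) t ∧ HasDerivAt (deriv γ) (A (γ t, deriv γ t)) t := by
  obtain ⟨α, hα₀, ε, hε, hα⟩ :=
    (contDiffAt_snd.prodMk hA).exists_forall_mem_closedBall_exists_eq_forall_mem_Ioo_hasDerivAt₀ t₀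
  have ht₀ : t₀ ∈ Set.Ioo (t₀ - ε) (t₀ + ε) := by simp [hε]
  have hpos : ∀ t ∈ Set.Ioo (t₀ - ε) (t₀ + ε), HasDerivAt (fun s ↦ (α s).1) (α t).2 t :=
    fun t ht ↦ (hα t ht).fst
  have hvel : ∀ t ∈ Set.Ioo (t₀ - ε) (t₀ + ε), deriv (fun s ↦ (α s).1) t = (α t).2 :=
    fun t ht ↦ (hpos t ht).deriv
  have hαU : ∀ᶠ t in 𝓝 t₀, α t ∈ U :=
    (hα t₀ ht₀).continuousAt.eventually_mem (by rwa [hα₀])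
  obtain ⟨δ, hδ, hδU⟩ := Metric.eventually_nhds_iff_ball.1 hαU
  rw [Real.ball_eq_Ioo] at hδU
  refine ⟨fun s ↦ (α s).1, min ε δ, lt_min hε hδ, by simp [hvel t₀ ht₀, hα₀], fun t ht ↦ ?_⟩
  have htε : t ∈ Set.Ioo (t₀ - ε) (t₀ + ε) :=
    Set.Ioo_subset_Ioo (by gcongr; exact min_le_left ε δ) (by gcongr; exact min_le_left ε δ) ht
  have htδ : t ∈ Set.Ioo (t₀ - δ) (t₀ + δ) :=
    Set.Ioo_subset_Ioo (by gcongr; exact min_le_right ε δ) (by gcongr; exact min_le_right ε δ) ht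
  rw [hvel t htε]
  have hacc : HasDerivAt (fun s ↦ (α s).2) (A (α t)) t := (hα t htε).snd
  exact ⟨hδU t htδ, hpos t htε, hacc.congr_of_eventuallyEq
    (Filter.eventually_of_mem (isOpen_Ioo.mem_nhds htε) hvel)⟩

end Curves

section Lagrangian

variable {V : Type*} [NormedAddCommGroup V] [NormedSpace ℝ V]

/-- The acceleration prescribed by the Euler–Lagrange equation of a Lagrangian `L (x, y)`: the
solution `a` of `∂²L/∂y² a + ∂²L/∂x∂y y = ∂L/∂x`. It is the spray of `L`, up to the customary
factor `-2`, and is meaningful only where the fibre Hessian is invertible. -/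
def sprayAcceleration (L : V × V → ℝ) (p : V × V) : V :=
  (fiberHessian L p).inverse (baseDeriv L p - fderiv ℝ (fiberDeriv L) p (p.2, 0))

lemma fderiv_fiberDeriv_eq_baseDeriv_iff {L : V × V → ℝ} {p : V × V}
    (hL : (fiberHessian L p).IsInvertible) (a : V) :
    fderiv ℝ (fiberDeriv L) p (p.2, a) = baseDeriv L p ↔ sprayAcceleration L p = a := by
  rw [sprayAcceleration, hL.inverse_apply_eq, sub_eq_iff_eq_add', eq_comm,
    fderiv_apply_eq_baseDeriv_add_fiberDeriv (fiberDeriv L)]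
  rfl

lemma contDiffAt_sprayAcceleration [CompleteSpace V] {m : WithTop ℕ∞} {L : V × V → ℝ} {p : V × V}
    (hL : ContDiffAt ℝ (m + 1 + 1) L p) (hreg : (fiberHessian L p).IsInvertible) :
    ContDiffAt ℝ m (sprayAcceleration L) p := by
  have hbase : ContDiffAt ℝ m (baseDeriv L) p := contDiffAt_baseDeriv (hL.of_le le_self_add)
  have hmixed : ContDiffAt ℝ m (fun q ↦ fderiv ℝ (fiberDeriv L) q (q.2, 0)) p :=
    (contDiffAt_fiberDeriv hL).fderiv_right_succ.clm_apply
      (contDiffAt_snd.prodMk contDiffAt_const)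
  have hinverse : ContDiffAt ℝ m (fun q ↦ (fiberHessian L q).inverse) p := by
    obtain ⟨e, he⟩ := hreg
    have hmap := contDiffAt_map_inverse (n := m) e
    rw [he] at hmap
    exact hmap.comp p (contDiffAt_fiberHessian hL)
  exact hinverse.clm_apply (hbase.sub hmixed)

lemma sprayAcceleration_eq_zero_iff {L : V × V → ℝ} {p : V × V} (hL : ContDiffAt ℝ 2 L p)
    (hhom : FiberHomogeneous 2 L) (hreg : (fiberHessian L p).IsInvertible) :
    sprayAcceleration L p = 0 ↔ ∀ w : V,
      fderiv ℝ (fiberDeriv L) p (p.2, 0) w = 1 / 2 * fderiv ℝ (fiberDeriv L) p (w, 0) p.2 := by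
  rw [← fderiv_fiberDeriv_eq_baseDeriv_iff hreg, ContinuousLinearMap.ext_iff]
  refine forall_congr' fun w ↦ ?_
  have heuler : fderiv ℝ (baseDeriv L) p (0, p.2) = (2 : ℝ) • baseDeriv L p :=
    hhom.baseDeriv.fiberDeriv_apply_self (differentiableAt_baseDeriv hL)
  simp [fderiv_fiberDeriv_inl_eq_fderiv_baseDeriv_inr hL w, heuler]

lemma hasDerivAt_comp_zero_of_eulerLagrange {L : V × V → ℝ} {k : ℕ} (hk : k ≠ 1)
    (hhom : FiberHomogeneous k L) {α : ℝ → V × V} {t : ℝ} {a : V} (hL : ContDiffAt ℝ 2 L (α t))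
    (hα : HasDerivAt α ((α t).2, a) t)
    (hEL : fderiv ℝ (fiberDeriv L) (α t) ((α t).2, a) = baseDeriv L (α t)) :
    HasDerivAt (L ∘ α) 0 t := by
  have henergy : HasDerivAt (L ∘ α) (fderiv ℝ L (α t) ((α t).2, a)) t :=
    (hL.differentiableAt two_ne_zero).hasFDerivAt.comp_hasDerivAt t hα
  have hmomentum : HasDerivAt (fun s ↦ fiberDeriv L (α s)) (baseDeriv L (α t)) t :=
    hEL ▸ (differentiableAt_fiberDeriv hL).hasFDerivAt.comp_hasDerivAt t hα
  have hpairing : HasDerivAt (fun s ↦ fiberDeriv L (α s) (α s).2)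
      (fderiv ℝ L (α t) ((α t).2, a)) t := by
    rw [fderiv_apply_eq_baseDeriv_add_fiberDeriv]
    exact hmomentum.clm_apply hα.snd
  have heuler : (fun s ↦ fiberDeriv L (α s) (α s).2) =ᶠ[𝓝 t] fun s ↦ (k : ℝ) • (L ∘ α) s := by
    filter_upwards [hα.continuousAt.eventually (hL.eventually (by simp))] with s hs
    exact hhom.fiberDeriv_apply_self (hs.differentiableAt two_ne_zero)
  have hk' : (k : ℝ) - 1 ≠ 0 := sub_ne_zero.2 (by exact_mod_cast hk)
  have hzero : ((k : ℝ) - 1) * fderiv ℝ L (α t) ((α t).2, a) = 0 := by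
    have := (henergy.const_smul (k : ℝ)).unique (hpairing.congr_of_eventuallyEq heuler.symm)
    rw [smul_eq_mul] at this
    linear_combination this
  rwa [(mul_eq_zero_iff_left hk').1 hzero] at henergy

/-- Along a curve of constant speed the momentum of `F ^ 2` is a constant multiple of that
of `F`. -/
lemma hasDerivAt_fiberDeriv_iff_eulerLagrange_sq {F : V × V → ℝ} {α : ℝ → V × V} {v : V × V}
    {t c : ℝ} (hF : ContDiffAt ℝ 2 F (α t)) (hα : HasDerivAt α v t) (hc : c ≠ 0)
    (hspeed : ∀ᶠ s in 𝓝 t, F (α s) = c) :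
    HasDerivAt (fun s ↦ fiberDeriv F (α s)) (baseDeriv F (α t)) t ↔
      fderiv ℝ (fiberDeriv (F ^ 2)) (α t) v = baseDeriv (F ^ 2) (α t) := by
  have hmomentum : HasDerivAt (fun s ↦ fiberDeriv (F ^ 2) (α s))
      (fderiv ℝ (fiberDeriv (F ^ 2)) (α t) v) t :=
    (differentiableAt_fiberDeriv (hF.pow 2)).hasFDerivAt.comp_hasDerivAt t hα
  have hfiber : (fun s ↦ fiberDeriv (F ^ 2) (α s)) =ᶠ[𝓝 t]
      fun s ↦ (2 * c) • fiberDeriv F (α s) := by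
    filter_upwards [hspeed, hα.continuousAt.eventually (hF.eventually (by simp))] with s hs hFs
    rw [fiberDeriv_sq (hFs.differentiableAt two_ne_zero), hs]
  have hbase : baseDeriv (F ^ 2) (α t) = (2 * c) • baseDeriv F (α t) := by
    rw [baseDeriv_sq (hF.differentiableAt two_ne_zero), hspeed.self_of_nhds]
  have h2c : 2 * c ≠ 0 := mul_ne_zero two_ne_zero hc
  rw [hbase]
  constructor
  · intro h
    exact hmomentum.unique ((h.const_smul (2 * c)).congr_of_eventuallyEq hfiber)
  · intro h
    rw [h] at hmomentum
    refine ((hmomentum.congr_of_eventuallyEq hfiber.symm).const_smul (2 * c)⁻¹).congr_deriv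
      (inv_smul_smul₀ h2c _) |>.congr_of_eventuallyEq (.of_eq (funext fun s ↦ ?_))
    exact (inv_smul_smul₀ h2c _).symm

end Lagrangian

section Geodesics

/-- The slit tangent bundle of `V`, on which Finsler functions are smooth. -/
def slitTangentBundle (V : Type*) [Zero V] : Set (V × V) := {p | p.2 ≠ 0}

lemma isOpen_slitTangentBundle {V : Type*} [Zero V] [TopologicalSpace V] [T2Space V] :
    IsOpen (slitTangentBundle V) :=
  isOpen_ne_fun continuous_snd continuous_const

variable {V : Type*} [NormedAddCommGroup V] [NormedSpace ℝ V]

/-- The coordinate-free form of `IsGeodesic`, for functions on the tangent bundle of a normed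
space: the Euler–Lagrange equation is an equation between covectors. -/
structure IsFinslerGeodesic (F : V × V → ℝ) (γ : ℝ → V) (t₁ t₂ : ℝ) : Prop where
  lt : t₁ < t₂
  smooth : ContDiffOn ℝ 2 γ (Set.Ioo t₁ t₂)
  vel : ∀ t ∈ Set.Ioo t₁ t₂, deriv γ t ≠ 0
  constSpeed : ∃ c : ℝ, 0 < c ∧ ∀ t ∈ Set.Ioo t₁ t₂, F (γ t, deriv γ t) = c
  eulerLagrange : ∀ t ∈ Set.Ioo t₁ t₂,
    HasDerivAt (fun s ↦ fiberDeriv F (γ s, deriv γ s)) (baseDeriv F (γ t, deriv γ t)) t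

/-- The coordinate-free form of `ParamFlat`: every geodesic is `t ↦ t • a + b` for some `a ≠ 0`. -/
def HasAffineGeodesics (F : V × V → ℝ) : Prop :=
  ∀ (γ : ℝ → V) (t₁ t₂ : ℝ), IsFinslerGeodesic F γ t₁ t₂ →
    ∃ a b : V, a ≠ 0 ∧ ∀ t ∈ Set.Ioo t₁ t₂, γ t = t • a + b

/-- A Finsler function on a normed space that is only of class `C³` and whose fundamental tensor is
only required to be nondegenerate. -/
structure IsNondegenerateFinsler (F : V × V → ℝ) : Prop where
  contDiffOn : ContDiffOn ℝ 3 F (slitTangentBundle V)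
  fiberHomogeneous : FiberHomogeneous 1 F
  pos : ∀ p ∈ slitTangentBundle V, 0 < F p
  isInvertible_fiberHessian : ∀ p ∈ slitTangentBundle V, (fiberHessian (F ^ 2) p).IsInvertible

namespace IsNondegenerateFinsler

variable {F : V × V → ℝ}

lemma contDiffAt (hF : IsNondegenerateFinsler F) {p : V × V} (hp : p ∈ slitTangentBundle V) :
    ContDiffAt ℝ 3 F p :=
  hF.contDiffOn.contDiffAt (isOpen_slitTangentBundle.mem_nhds hp)

lemma contDiffAt_two (hF : IsNondegenerateFinsler F) {p : V × V}
    (hp : p ∈ slitTangentBundle V) : ContDiffAt ℝ 2 F p :=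
  (hF.contDiffAt hp).of_le (by norm_num)

lemma contDiffAt_sprayAcceleration [CompleteSpace V] (hF : IsNondegenerateFinsler F) {p : V × V}
    (hp : p ∈ slitTangentBundle V) : ContDiffAt ℝ 1 (sprayAcceleration (F ^ 2)) p := by
  refine _root_.contDiffAt_sprayAcceleration ?_ (hF.isInvertible_fiberHessian p hp)
  have hsq : ContDiffAt ℝ 3 (F ^ 2) p := (hF.contDiffAt hp).pow 2
  convert hsq using 1
  norm_num

lemma eulerLagrange_iff_sprayAcceleration_eq (hF : IsNondegenerateFinsler F) {γ : ℝ → V} {a : V}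
    {t c : ℝ} (hγ : HasDerivAt γ (deriv γ t) t) (hγ' : HasDerivAt (deriv γ) a t)
    (hvel : deriv γ t ≠ 0) (hc : c ≠ 0) (hspeed : ∀ᶠ s in 𝓝 t, F (γ s, deriv γ s) = c) :
    HasDerivAt (fun s ↦ fiberDeriv F (γ s, deriv γ s)) (baseDeriv F (γ t, deriv γ t)) t ↔
      sprayAcceleration (F ^ 2) (γ t, deriv γ t) = a := by
  rw [hasDerivAt_fiberDeriv_iff_eulerLagrange_sq (hF.contDiffAt_two hvel) (hγ.prodMk hγ') hc hspeed]
  exact fderiv_fiberDeriv_eq_baseDeriv_iff (hF.isInvertible_fiberHessian _ hvel) a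

lemma hasDerivAt_deriv_of_geodesic (hF : IsNondegenerateFinsler F) {γ : ℝ → V} {t₁ t₂ : ℝ}
    (hγ : IsFinslerGeodesic F γ t₁ t₂) {t : ℝ} (ht : t ∈ Set.Ioo t₁ t₂) :
    HasDerivAt (deriv γ) (sprayAcceleration (F ^ 2) (γ t, deriv γ t)) t := by
  obtain ⟨hγ₁, hγ₂⟩ := hasDerivAt_deriv_of_contDiffOn_two isOpen_Ioo hγ.smooth ht
  obtain ⟨c, hc, hspeed⟩ := hγ.constSpeed
  rwa [(hF.eulerLagrange_iff_sprayAcceleration_eq hγ₁ hγ₂ (hγ.vel t ht) hc.ne'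
    (Filter.eventually_of_mem (isOpen_Ioo.mem_nhds ht) hspeed)).1 (hγ.eulerLagrange t ht)]

lemma eq_of_hasDerivAt_sprayAcceleration (hF : IsNondegenerateFinsler F) {γ : ℝ → V} {S : Set ℝ}
    (hS : IsOpen S) (hconn : IsPreconnected S) (hvel : ∀ t ∈ S, deriv γ t ≠ 0)
    (hγ : ∀ t ∈ S, HasDerivAt γ (deriv γ t) t)
    (hγ' : ∀ t ∈ S, HasDerivAt (deriv γ) (sprayAcceleration (F ^ 2) (γ t, deriv γ t)) t)
    {s t : ℝ} (hs : s ∈ S) (ht : t ∈ S) : F (γ s, deriv γ s) = F (γ t, deriv γ t) := by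
  have henergy : ∀ r ∈ S, HasDerivAt ((F ^ 2) ∘ fun r ↦ (γ r, deriv γ r)) 0 r := fun r hr ↦
    hasDerivAt_comp_zero_of_eulerLagrange (k := 2) (by norm_num) hF.fiberHomogeneous.sq
      ((hF.contDiffAt_two (hvel r hr)).pow 2) ((hγ r hr).prodMk (hγ' r hr))
      ((fderiv_fiberDeriv_eq_baseDeriv_iff (hF.isInvertible_fiberHessian _ (hvel r hr)) _).2 rfl)
  have hsq : F (γ s, deriv γ s) ^ 2 = F (γ t, deriv γ t) ^ 2 :=
    hS.is_const_of_deriv_eq_zero hconn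
      (fun r hr ↦ (henergy r hr).differentiableAt.differentiableWithinAt)
      (fun r hr ↦ (henergy r hr).deriv) hs ht
  exact (pow_left_inj₀ (hF.pos _ (hvel s hs)).le (hF.pos _ (hvel t ht)).le two_ne_zero).1 hsq

lemma isFinslerGeodesic_of_hasDerivAt_sprayAcceleration [CompleteSpace V]
    (hF : IsNondegenerateFinsler F) {γ : ℝ → V} {t₁ t₂ : ℝ} (hlt : t₁ < t₂)
    (hvel : ∀ t ∈ Set.Ioo t₁ t₂, deriv γ t ≠ 0)
    (hγ : ∀ t ∈ Set.Ioo t₁ t₂, HasDerivAt γ (deriv γ t) t)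
    (hγ' : ∀ t ∈ Set.Ioo t₁ t₂,
      HasDerivAt (deriv γ) (sprayAcceleration (F ^ 2) (γ t, deriv γ t)) t) :
    IsFinslerGeodesic F γ t₁ t₂ := by
  obtain ⟨m, hm⟩ := Set.nonempty_Ioo.2 hlt
  have hpos : 0 < F (γ m, deriv γ m) := hF.pos _ (hvel m hm)
  have hspeed : ∀ t ∈ Set.Ioo t₁ t₂, F (γ t, deriv γ t) = F (γ m, deriv γ m) := fun t ht ↦
    hF.eq_of_hasDerivAt_sprayAcceleration isOpen_Ioo isPreconnected_Ioo hvel hγ hγ' ht hm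
  have hacc : ContinuousOn (fun t ↦ sprayAcceleration (F ^ 2) (γ t, deriv γ t))
      (Set.Ioo t₁ t₂) := fun t ht ↦
    ((hF.contDiffAt_sprayAcceleration (hvel t ht)).continuousAt.comp
      ((hγ t ht).prodMk (hγ' t ht)).continuousAt).continuousWithinAt
  refine ⟨hlt, ?_, hvel, ⟨_, hpos, hspeed⟩, fun t ht ↦ ?_⟩
  · exact contDiffOn_two_of_hasDerivAt isOpen_Ioo (fun t ht ↦ (hγ t ht).differentiableAt) hγ' hacc
  · exact (hF.eulerLagrange_iff_sprayAcceleration_eq (hγ t ht) (hγ' t ht) (hvel t ht) hpos.ne'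
      (Filter.eventually_of_mem (isOpen_Ioo.mem_nhds ht) hspeed)).2 rfl

lemma exists_isFinslerGeodesic [CompleteSpace V] (hF : IsNondegenerateFinsler F) {p : V × V}
    (hp : p ∈ slitTangentBundle V) (t₀ : ℝ) :
    ∃ γ : ℝ → V, ∃ ε > 0, (γ t₀, deriv γ t₀) = p ∧
      IsFinslerGeodesic F γ (t₀ - ε) (t₀ + ε) := by
  obtain ⟨γ, ε, hε, hγ₀, hγ⟩ := exists_secondOrder_solution (hF.contDiffAt_sprayAcceleration hp)
    (isOpen_slitTangentBundle.mem_nhds hp) t₀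
  exact ⟨γ, ε, hε, hγ₀, hF.isFinslerGeodesic_of_hasDerivAt_sprayAcceleration (by linarith)
    (fun t ht ↦ (hγ t ht).1) (fun t ht ↦ (hγ t ht).2.1) fun t ht ↦ (hγ t ht).2.2⟩

lemma hasAffineGeodesics_iff_sprayAcceleration_eq_zero [CompleteSpace V]
    (hF : IsNondegenerateFinsler F) :
    HasAffineGeodesics F ↔ ∀ p ∈ slitTangentBundle V, sprayAcceleration (F ^ 2) p = 0 := by
  constructor
  · intro hflat p hp
    obtain ⟨γ, ε, hε, rfl, hγ⟩ := hF.exists_isFinslerGeodesic hp 0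
    obtain ⟨a, b, -, hab⟩ := hflat γ _ _ hγ
    have h0 : (0 : ℝ) ∈ Set.Ioo (0 - ε) (0 + ε) := by simp [hε]
    have haffine : γ =ᶠ[𝓝 0] fun t ↦ t • a + b :=
      Filter.eventually_of_mem (isOpen_Ioo.mem_nhds h0) hab
    have hvel : deriv γ =ᶠ[𝓝 0] fun _ ↦ a :=
      haffine.deriv.trans (.of_eq (funext fun t ↦ (hasDerivAt_smul_add a b t).deriv))
    exact (hF.hasDerivAt_deriv_of_geodesic hγ h0).unique
      ((hasDerivAt_const 0 a).congr_of_eventuallyEq hvel)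
  · intro hzero γ t₁ t₂ hγ
    obtain ⟨m, hm⟩ := Set.nonempty_Ioo.2 hγ.lt
    refine ⟨deriv γ m, γ m - m • deriv γ m, hγ.vel m hm, fun t ht ↦ ?_⟩
    refine eq_smul_add_of_hasDerivAt_deriv_zero isOpen_Ioo isPreconnected_Ioo
      (fun s hs ↦ ?_) (fun s hs ↦ ?_) hm ht
    · exact (hasDerivAt_deriv_of_contDiffOn_two isOpen_Ioo hγ.smooth hs).1.differentiableAt
    · exact hzero (γ s, deriv γ s) (hγ.vel s hs) ▸ hF.hasDerivAt_deriv_of_geodesic hγ hs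

end IsNondegenerateFinsler

theorem statement10_general [CompleteSpace V] {F : V × V → ℝ} (hF : IsNondegenerateFinsler F) :
    HasAffineGeodesics F ↔ ∀ x y : V, y ≠ 0 → ∀ w : V,
      fderiv ℝ (fiberDeriv (F ^ 2)) (x, y) (y, 0) w =
        1 / 2 * fderiv ℝ (fiberDeriv (F ^ 2)) (x, y) (w, 0) y := by
  rw [hF.hasAffineGeodesics_iff_sprayAcceleration_eq_zero, Prod.forall]
  refine forall₃_congr fun x y (hy : (x, y) ∈ slitTangentBundle V) ↦ ?_
  exact sprayAcceleration_eq_zero_iff ((hF.contDiffAt_two hy).pow 2)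
    hF.fiberHomogeneous.sq (hF.isInvertible_fiberHessian _ hy)

end Geodesics

section Coordinates

lemma isInvertible_of_forall_apply_self_ne_zero {V : Type*} [NormedAddCommGroup V]
    [NormedSpace ℝ V] [FiniteDimensional ℝ V] {B : V →L[ℝ] V →L[ℝ] ℝ}
    (hB : ∀ w ≠ 0, B w w ≠ 0) : B.IsInvertible := by
  have hinj : Function.Injective (B : V →ₗ[ℝ] V →L[ℝ] ℝ) := by
    refine (injective_iff_map_eq_zero _).2 fun w hw ↦ not_imp_not.1 (hB w) ?_
    simpa using DFunLike.congr_fun hw w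
  have hrank : Module.finrank ℝ V = Module.finrank ℝ (V →L[ℝ] ℝ) :=
    Subspace.dual_finrank_eq.symm.trans LinearMap.toContinuousLinearMap.finrank_eq
  exact ⟨(LinearEquiv.ofInjectiveOfFinrankEq _ hinj hrank).toContinuousLinearEquiv,
    ContinuousLinearMap.coe_injective
      (LinearEquiv.coe_ofInjectiveOfFinrankEq _ hinj hrank)⟩

section Pi

variable {ι : Type*} [DecidableEq ι]

lemma sum_apply_single_mul [Fintype ι] (ℓ : (ι → ℝ) →L[ℝ] ℝ) (y : ι → ℝ) :
    ∑ k, ℓ (Pi.single k 1) * y k = ℓ y := by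
  conv_rhs => rw [← Finset.univ_sum_single y, map_sum]
  refine Finset.sum_congr rfl fun k _ ↦ ?_
  rw [mul_comm, ← smul_eq_mul, ← map_smul, ← Pi.single_smul', smul_eq_mul, mul_one]

lemma clm_eq_iff_forall_apply_single [Finite ι] {ℓ m : (ι → ℝ) →L[ℝ] ℝ} :
    ℓ = m ↔ ∀ i, ℓ (Pi.single i 1) = m (Pi.single i 1) := by
  refine ⟨fun h i ↦ h ▸ rfl, fun h ↦ ContinuousLinearMap.coe_injective ?_⟩
  exact (Pi.basisFun ℝ ι).ext fun i ↦ by simpa using h i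

lemma hasDerivAt_iff_forall_deriv_apply_single [Finite ι] {ℓ : ℝ → (ι → ℝ) →L[ℝ] ℝ}
    {m : (ι → ℝ) →L[ℝ] ℝ} {t : ℝ} (hℓ : DifferentiableAt ℝ ℓ t) :
    HasDerivAt ℓ m t ↔ ∀ i, deriv (fun s ↦ ℓ s (Pi.single i 1)) t = m (Pi.single i 1) := by
  have := Fintype.ofFinite ι
  have hcoord : ∀ i, deriv (fun s ↦ ℓ s (Pi.single i 1)) t = deriv ℓ t (Pi.single i 1) :=
    fun i ↦ by simpa using (hℓ.hasDerivAt.clm_apply (hasDerivAt_const t (Pi.single i 1))).deriv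
  simp only [hcoord, ← clm_eq_iff_forall_apply_single]
  exact ⟨HasDerivAt.deriv, fun h ↦ h ▸ hℓ.hasDerivAt⟩

end Pi

variable {n : ℕ}

lemma fderiv_pdy_apply {L : E n × E n → ℝ} {p : E n × E n} (hL : ContDiffAt ℝ 2 L p) (i : Fin n)
    (v : E n × E n) : fderiv ℝ (pdy i L) p v = fderiv ℝ (fiberDeriv L) p v (Pi.single i 1) := by
  change fderiv ℝ (fun q ↦ fiberDeriv L q (Pi.single i 1)) p v = _
  simp [fderiv_clm_apply (differentiableAt_fiberDeriv hL) (differentiableAt_const _)]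

lemma sum_pdx_pdy_mul_eq_fderiv {L : E n × E n → ℝ} {p : E n × E n} (hL : ContDiffAt ℝ 2 L p)
    (i : Fin n) (y : E n) :
    ∑ k, pdx k (pdy i L) p * y k = fderiv ℝ (fiberDeriv L) p (y, 0) (Pi.single i 1) := by
  rw [← fderiv_pdy_apply hL]
  exact sum_apply_single_mul (baseDeriv (pdy i L) p) y

lemma sum_pdx_pdy_mul_eq_fderiv_flip {L : E n × E n → ℝ} {p : E n × E n}
    (hL : ContDiffAt ℝ 2 L p) (i : Fin n) (y : E n) :
    ∑ k, pdx i (pdy k L) p * y k = fderiv ℝ (fiberDeriv L) p (Pi.single i 1, 0) y := by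
  simp only [pdx, fderiv_pdy_apply hL]
  exact sum_apply_single_mul _ y

lemma dotProduct_pdy_pdy_mulVec {L : E n × E n → ℝ} {p : E n × E n} (hL : ContDiffAt ℝ 2 L p)
    (w : E n) :
    w ⬝ᵥ (Matrix.of fun i j ↦ pdy i (pdy j L) p).mulVec w = fiberHessian L p w w := by
  have hentry : ∀ i j,
      pdy i (pdy j L) p = fiberHessian L p (Pi.single i 1) (Pi.single j 1) := fun i j ↦
    fderiv_pdy_apply hL j (0, Pi.single i 1)
  have hmulVec : ∀ i, (Matrix.of fun i j ↦ pdy i (pdy j L) p).mulVec w i =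
      (fiberHessian L p).flip w (Pi.single i 1) := fun i ↦ by
    simp only [Matrix.mulVec, dotProduct, Matrix.of_apply, hentry, sum_apply_single_mul,
      ContinuousLinearMap.flip_apply]
  simp only [dotProduct, hmulVec, mul_comm (w _)]
  exact sum_apply_single_mul ((fiberHessian L p).flip w) w

lemma forall_fderiv_fiberDeriv_iff_sum_pdx_pdy {L : E n × E n → ℝ} {x y : E n}
    (hL : ContDiffAt ℝ 2 L (x, y)) :
    (∀ w, fderiv ℝ (fiberDeriv L) (x, y) (y, 0) w =
      1 / 2 * fderiv ℝ (fiberDeriv L) (x, y) (w, 0) y) ↔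
    ∀ i, ∑ k, pdx k (pdy i L) (x, y) * y k = 1 / 2 * ∑ k, pdx i (pdy k L) (x, y) * y k := by
  simp only [sum_pdx_pdy_mul_eq_fderiv hL, sum_pdx_pdy_mul_eq_fderiv_flip hL]
  set D := fderiv ℝ (fiberDeriv L) (x, y)
  exact ContinuousLinearMap.ext_iff.symm.trans
    (clm_eq_iff_forall_apply_single (ℓ := D (y, 0)) (m := (1 / 2 : ℝ) • D.flip y ∘L .inl ℝ _ _))

namespace IsFinsler

variable {F : E n × E n → ℝ}

lemma contDiffOn_three (hF : IsFinsler F) : ContDiffOn ℝ 3 F (slitTangentBundle (E n)) :=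
  hF.smooth.of_le (WithTop.coe_le_coe.2 (le_top : (3 : ℕ∞) ≤ ⊤))

lemma fiberHessian_sq_apply_self_pos (hF : IsFinsler F) {p : E n × E n}
    (hp : p ∈ slitTangentBundle (E n)) {w : E n} (hw : w ≠ 0) :
    0 < fiberHessian (F ^ 2) p w w := by
  have hF₃ : ContDiffAt ℝ 3 F p :=
    hF.contDiffOn_three.contDiffAt (isOpen_slitTangentBundle.mem_nhds hp)
  have hsq : ContDiffAt ℝ 2 (F ^ 2) p := (hF₃.of_le (by norm_num)).pow 2
  have hsmul : (Matrix.of fun i j ↦ 1 / 2 * pdy i (pdy j (F ^ 2)) p) =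
      (1 / 2 : ℝ) • Matrix.of fun i j ↦ pdy i (pdy j (F ^ 2)) p := rfl
  have hpos : 0 < w ⬝ᵥ (Matrix.of fun i j ↦ 1 / 2 * pdy i (pdy j (F ^ 2)) p).mulVec w :=
    (hF.posDef p.1 p.2 hp).dotProduct_mulVec_pos hw
  rw [hsmul, Matrix.smul_mulVec, dotProduct_smul, dotProduct_pdy_pdy_mulVec hsq] at hpos
  simpa using hpos

lemma isNondegenerateFinsler (hF : IsFinsler F) : IsNondegenerateFinsler F where
  contDiffOn := hF.contDiffOn_three
  fiberHomogeneous x y c hc := by simpa using hF.homog x y c hc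
  pos p hp := hF.pos p.1 p.2 hp
  isInvertible_fiberHessian _ hp := isInvertible_of_forall_apply_self_ne_zero fun _ hw ↦
    (hF.fiberHessian_sq_apply_self_pos hp hw).ne'

lemma isGeodesic_iff (hF : IsFinsler F) {γ : ℝ → E n} {t₁ t₂ : ℝ} :
    IsGeodesic F γ t₁ t₂ ↔ IsFinslerGeodesic F γ t₁ t₂ := by
  have hEL (hγ : ContDiffOn ℝ 2 γ (Set.Ioo t₁ t₂)) (hvel : ∀ t ∈ Set.Ioo t₁ t₂, deriv γ t ≠ 0)
      (t : ℝ) (ht : t ∈ Set.Ioo t₁ t₂) :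
      HasDerivAt (fun s ↦ fiberDeriv F (γ s, deriv γ s)) (baseDeriv F (γ t, deriv γ t)) t ↔
        ∀ i, deriv (fun s ↦ pdy i F (γ s, deriv γ s)) t = pdx i F (γ t, deriv γ t) := by
    obtain ⟨hγ₁, hγ₂⟩ := hasDerivAt_deriv_of_contDiffOn_two isOpen_Ioo hγ ht
    have hF₂ : ContDiffAt ℝ 2 F (γ t, deriv γ t) :=
      hF.isNondegenerateFinsler.contDiffAt_two (hvel t ht)
    have hmomentum : DifferentiableAt ℝ (fun s ↦ fiberDeriv F (γ s, deriv γ s)) t :=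
      (differentiableAt_fiberDeriv hF₂).comp (f := fun s ↦ (γ s, deriv γ s)) t
        (hγ₁.prodMk hγ₂).differentiableAt
    exact hasDerivAt_iff_forall_deriv_apply_single hmomentum
  constructor
  · rintro ⟨hlt, hγ, hvel, hspeed, hγEL⟩
    exact ⟨hlt, hγ, hvel, hspeed, fun t ht ↦ (hEL hγ hvel t ht).2 fun i ↦ hγEL i t ht⟩
  · rintro ⟨hlt, hγ, hvel, hspeed, hγEL⟩
    exact ⟨hlt, hγ, hvel, hspeed, fun i t ht ↦ (hEL hγ hvel t ht).1 (hγEL t ht) i⟩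

lemma paramFlat_iff (hF : IsFinsler F) : ParamFlat F ↔ HasAffineGeodesics F := by
  simp only [ParamFlat, HasAffineGeodesics, hF.isGeodesic_iff]

end IsFinsler

end Coordinates

/-- `(ℝⁿ, F)` is projectively flat in a parameter-preserving manner iff
`∑_k ∂²(F²)/∂x^k∂y^i · y^k = ½ ∑_k ∂²(F²)/∂x^i∂y^k · y^k`. -/
theorem statement10 {n : ℕ} (F : E n × E n → ℝ) (hF : IsFinsler F) :
    ParamFlat F ↔
    (∀ (x y : E n), y ≠ 0 → ∀ i : Fin n,
      ∑ k, pdx k (pdy i (fun p => F p ^ 2)) (x, y) * y k =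
        (1 / 2) * ∑ k, pdx i (pdy k (fun p => F p ^ 2)) (x, y) * y k) := by
  rw [hF.paramFlat_iff, statement10_general hF.isNondegenerateFinsler]
  refine forall₃_congr fun x y (hy : (x, y) ∈ slitTangentBundle (E n)) ↦ ?_
  exact forall_fderiv_fiberDeriv_iff_sum_pdx_pdy
    ((hF.isNondegenerateFinsler.contDiffAt_two hy).pow 2)
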